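/- Let $S$ be a real-analytic function on a neighborhood of the origin in $\mathbf{R}^n$, not identically zero, with $S(0)=0$ and $\nabla S(0)=0$. Then there exist $r_0>0$, $a_0>0$, and an integer $d_0$ with $0\le d_0\le n-1$, such that for every $0<r<r_0$ there are positive constants $b_r$ and $B_r$ with $b_r\,\epsilon^{a_0}|\ln\epsilon|^{d_0} < \mu(\{\mathbf{t}\in(0,r)^n : S^*(\mathbf{t})<\epsilon\}) < B_r\,\epsilon^{a_0}|\ln\epsilon|^{d_0}$ for all $0<\epsilon<1/2$. -/

import Mathlib

open MeasureTheory Real Filter Topology Set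
open scoped ENNReal

noncomputable section

namespace Paper

variable {n m : ℕ}

/-- The monomial `t ^ α`. -/
def monomial (α : Fin n → ℕ) (t : Fin n → ℝ) : ℝ := ∏ i, t i ^ α i

/-- `S` is real-analytic near the origin with Taylor coefficient family `c`:
its Taylor series at the origin converges to it near `0`. -/
def HasTaylorSeriesAtOrigin (S : (Fin n → ℝ) → ℝ) (c : (Fin n → ℕ) → ℝ) : Prop :=
  ∀ᶠ t in 𝓝 (0 : Fin n → ℝ), HasSum (fun α => c α * monomial α t) (S t)

/-- The Newton polyhedron of the Taylor coefficient family `c`: the convex hull of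
the octants above the exponents of the nonzero coefficients. -/
def newtonPolyhedron (c : (Fin n → ℕ) → ℝ) : Set (Fin n → ℝ) :=
  convexHull ℝ {x : Fin n → ℝ | ∃ α : Fin n → ℕ, c α ≠ 0 ∧ ∀ i, (α i : ℝ) ≤ x i}

/-- The vertices (extreme points) of the Newton polyhedron. -/
def newtonVertices (c : (Fin n → ℕ) → ℝ) : Set (Fin n → ℝ) :=
  Set.extremePoints ℝ (newtonPolyhedron c)

/-- `f^*`, the sum of the absolute values of the vertex monomials. -/
def starFn (c : (Fin n → ℕ) → ℝ) (t : Fin n → ℝ) : ℝ :=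
  ∑' v : newtonVertices c, ∏ i, |t i| ^ ((v : Fin n → ℝ) i)

/-- Compact (exposed) faces of the Newton polyhedron; a vertex is a face of dimension zero. -/
def IsCompactFace (c : (Fin n → ℕ) → ℝ) (F : Set (Fin n → ℝ)) : Prop :=
  IsExposed ℝ (newtonPolyhedron c) F ∧ F.Nonempty ∧ IsCompact F

/-- The face polynomial `f_F(t) = ∑_{α ∈ F} f_α t^α`. -/
def facePoly (c : (Fin n → ℕ) → ℝ) (F : Set (Fin n → ℝ)) (t : Fin n → ℝ) : ℝ :=
  ∑' α : {α : Fin n → ℕ // (fun i => (α i : ℝ)) ∈ F}, c α.1 * monomial α.1 t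

/-- The order of vanishing of `g` at `x`. -/
def vanishingOrder (g : (Fin n → ℝ) → ℝ) (x : Fin n → ℝ) : ℕ∞ :=
  sSup {k : ℕ∞ | ∀ j : ℕ, (j : ℕ∞) < k → iteratedFDeriv ℝ j g x = 0}

/-- `o(f)`: the maximum order of a zero of a compact face polynomial on `(ℝ ∖ {0})^n`
(`0` if there are no such zeroes). -/
def newtonOrder (c : (Fin n → ℕ) → ℝ) : ℕ∞ :=
  sSup {k : ℕ∞ | ∃ F : Set (Fin n → ℝ), IsCompactFace c F ∧
    ∃ x : Fin n → ℝ, (∀ i, x i ≠ 0) ∧ facePoly c F x = 0 ∧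
      k ≤ vanishingOrder (facePoly c F) x}

/-- The Euclidean norm `|t_k|` of the `k`-th group of variables. -/
def grpNorm (grp : Fin n → Fin m) (k : Fin m) (t : Fin n → ℝ) : ℝ :=
  Real.sqrt (∑ i ∈ Finset.univ.filter (fun i => grp i = k), t i ^ 2)

/-- The weight `∏_k |t_k|^{-α_k}`. -/
def kernelWeight (grp : Fin n → Fin m) (a : Fin m → ℝ) (t : Fin n → ℝ) : ℝ :=
  ∏ k, grpNorm grp k t ^ (-(a k))

/-- The measure `dμ = ∏_k |t_k|^{-α_k} dm`, `m` being Lebesgue measure. -/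
def fracMeasure (grp : Fin n → Fin m) (a : Fin m → ℝ) : Measure (Fin n → ℝ) :=
  volume.withDensity fun t => ENNReal.ofReal (kernelWeight grp a t)

/-- The characterization (1.5) of the sublevel growth exponents `a₀`, `d₀`. -/
def IsSublevelExponent (grp : Fin n → Fin m) (a : Fin m → ℝ) (c : (Fin n → ℕ) → ℝ)
    (a₀ : ℝ) (d₀ : ℕ) : Prop :=
  0 < a₀ ∧ d₀ ≤ n - 1 ∧ ∃ r₀ > (0 : ℝ), ∀ r : ℝ, 0 < r → r < r₀ →
    ∃ b B : ℝ, 0 < b ∧ 0 < B ∧ ∀ ε : ℝ, 0 < ε → ε < 1/2 →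
      ENNReal.ofReal (b * ε ^ a₀ * |Real.log ε| ^ d₀) <
          fracMeasure grp a {t | (∀ i, t i ∈ Set.Ioo 0 r) ∧ starFn c t < ε} ∧
        fracMeasure grp a {t | (∀ i, t i ∈ Set.Ioo 0 r) ∧ starFn c t < ε} <
          ENNReal.ofReal (B * ε ^ a₀ * |Real.log ε| ^ d₀)

/-- The kernel bounds (1.2a)-(1.2b): `K` is `C¹` off the coordinate hyperplanes,
`|K(t)| ≤ C ∏_k |t_k|^{-α_k}` and `|∂_{t_i} K(t)| ≤ C |t_i|⁻¹ ∏_k |t_k|^{-α_k}`. -/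
def KernelBounds (grp : Fin n → Fin m) (a : Fin m → ℝ) (K : (Fin n → ℝ) → ℝ) : Prop :=
  ContDiffOn ℝ 1 K {t | ∀ i, t i ≠ 0} ∧
  ∃ C : ℝ, ∀ t : Fin n → ℝ, (∀ i, t i ≠ 0) →
    |K t| ≤ C * kernelWeight grp a t ∧
    ∀ i : Fin n, |fderiv ℝ K t (Pi.single i 1)| ≤ C / |t i| * kernelWeight grp a t

/-- The averaging operator (1.1),
`Tf(x, x_{n+1}) = ∫ f(x - t, x_{n+1} - S(t)) K(t) dt`. -/
def radonOp (S K : (Fin n → ℝ) → ℝ) (f : (Fin (n+1) → ℝ) → ℂ) :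
    (Fin (n+1) → ℝ) → ℂ :=
  fun x => ∫ t : Fin n → ℝ, (K t : ℂ) * f (fun j => x j - Fin.snoc (α := fun _ => ℝ) t (S t) j)

/-- The Fourier transform on `ℝ^N`. -/
def fourierTransform {N : ℕ} (g : (Fin N → ℝ) → ℂ) (ξ : Fin N → ℝ) : ℂ :=
  ∫ x : Fin N → ℝ,
    Complex.exp (-2 * (Real.pi : ℂ) * Complex.I * ((∑ i, x i * ξ i : ℝ) : ℂ)) * g x

/-- The inverse Fourier transform on `ℝ^N`. -/
def fourierInv {N : ℕ} (g : (Fin N → ℝ) → ℂ) (x : Fin N → ℝ) : ℂ :=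
  ∫ ξ : Fin N → ℝ,
    Complex.exp (2 * (Real.pi : ℂ) * Complex.I * ((∑ i, x i * ξ i : ℝ) : ℂ)) * g ξ

/-- The Bessel potential `(I - Δ)^{β/2} g`, defined via the Fourier transform. -/
def besselPotential {N : ℕ} (β : ℝ) (g : (Fin N → ℝ) → ℂ) : (Fin N → ℝ) → ℂ :=
  fun x => fourierInv
    (fun ξ => (((1 + ∑ i, ξ i ^ 2) ^ (β / 2) : ℝ) : ℂ) * fourierTransform g ξ) x

/-- `T` is bounded from `L^p(ℝ^N)` to the `L^p` Sobolev space `L^p_β(ℝ^N)`,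
whose norm is `‖(I - Δ)^{β/2} f‖_{L^p}`. -/
def BddLpSobolev {N : ℕ} (p β : ℝ)
    (T : ((Fin N → ℝ) → ℂ) → ((Fin N → ℝ) → ℂ)) : Prop :=
  ∃ C : ℝ, 0 ≤ C ∧ ∀ f : SchwartzMap (Fin N → ℝ) ℂ,
    eLpNorm (besselPotential β (T ⇑f)) (ENNReal.ofReal p) volume ≤
      ENNReal.ofReal C * eLpNorm (⇑f) (ENNReal.ofReal p) volume

/-- `min(|t₁|,...,|tₙ|, S^*(t))`. -/
def minFactor (c : (Fin n → ℕ) → ℝ) (t : Fin n → ℝ) : ℝ :=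
  min (⨅ i, |t i|) (starFn c t)

/-- The analytic family (3.1):
`T_z f(x) = e^{z²} ∫ (min(|t₁|,...,|tₙ|,S^*(t)))^z f(x - t, x_{n+1} - S(t)) K(t) dt`. -/
def radonOpZ (S K : (Fin n → ℝ) → ℝ) (c : (Fin n → ℕ) → ℝ) (z : ℂ)
    (f : (Fin (n+1) → ℝ) → ℂ) : (Fin (n+1) → ℝ) → ℂ :=
  fun x => Complex.exp (z ^ 2) *
    ∫ t : Fin n → ℝ,
      ((minFactor c t : ℂ) ^ z) * (K t : ℂ) * f (fun j => x j - Fin.snoc (α := fun _ => ℝ) t (S t) j)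

/-- The Fourier transform (3.8) of the convolution kernel `ν_z` of `T_z`. -/
def nuHatZ (S K : (Fin n → ℝ) → ℝ) (c : (Fin n → ℕ) → ℝ) (z : ℂ)
    (lam : Fin (n+1) → ℝ) : ℂ :=
  Complex.exp (z ^ 2) *
    ∫ t : Fin n → ℝ,
      Complex.exp (Complex.I *
          (((∑ i, lam i.castSucc * t i) + lam (Fin.last n) * S t : ℝ) : ℂ)) *
        ((minFactor c t : ℂ) ^ z) * (K t : ℂ)


/-- Conical hull of a set, as a submodule over the nonnegative reals. -/
abbrev cone {E : Type*} [AddCommGroup E] [Module ℝ E] (G : Set E) : Submodule NNReal E :=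
  Submodule.span NNReal G

lemma cone_smul_mem {E : Type*} [AddCommGroup E] [Module ℝ E] {G : Set E} {x : E}
    (hx : x ∈ cone G) {r : ℝ} (hr : 0 ≤ r) : r • x ∈ cone G := by
  have := (cone G).smul_mem ⟨r, hr⟩ hx
  exact this

lemma cone_pos {E : Type*} [AddCommGroup E] [Module ℝ E] {G : Set E} (ℓ : E →ₗ[ℝ] ℝ)
    (hG : ∀ g ∈ G, 0 ≤ ℓ g) {x : E} (hx : x ∈ cone G) : 0 ≤ ℓ x := by
  induction hx using Submodule.span_induction with
  | mem x h => exact hG x h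
  | zero => simp
  | add x y _ _ hx hy => rw [map_add]; exact add_nonneg hx hy
  | smul c x _ hx =>
    rw [NNReal.smul_def, map_smul, smul_eq_mul]; exact mul_nonneg c.2 hx

lemma cone_neg {E : Type*} [AddCommGroup E] [Module ℝ E] {G : Set E} (ℓ : E →ₗ[ℝ] ℝ)
    (hG : ∀ g ∈ G, ℓ g < 0) {x : E} (hx : x ∈ cone G) : x = 0 ∨ ℓ x < 0 := by
  induction hx using Submodule.span_induction with
  | mem x h => exact Or.inr (hG x h)
  | zero => simp
  | add x y _ _ hx hy =>
    rcases hx with rfl | hx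
    · simpa using hy
    · rcases hy with rfl | hy
      · right; simpa using hx
      · right; rw [map_add]; linarith
  | smul c x _ hx =>
    rcases hx with rfl | hx
    · left; simp
    · rcases eq_or_ne c 0 with rfl | hc
      · left; simp
      · right
        rw [NNReal.smul_def, map_smul, smul_eq_mul]
        have : (0 : ℝ) < c := by positivity
        nlinarith

lemma cone_bilin {E : Type*} [AddCommGroup E] [Module ℝ E] {G H K : Set E} (ℓ : E →ₗ[ℝ] ℝ)
    (hGH : ∀ g ∈ G, ∀ h ∈ H, ℓ g • h - ℓ h • g ∈ cone K) {x y : E} (hx : x ∈ cone G)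
    (hy : y ∈ cone H) : ℓ x • y - ℓ y • x ∈ cone K := by
  induction hx using Submodule.span_induction with
  | mem x h =>
    induction hy using Submodule.span_induction with
    | mem y h' => exact hGH x h y h'
    | zero => simp
    | add y z _ _ hy hz =>
      convert add_mem hy hz using 1
      rw [map_add]; module
    | smul c y _ hy =>
      convert cone_smul_mem hy c.2 using 1
      rw [NNReal.smul_def, map_smul, smul_eq_mul]
      change _ = (c : ℝ) • _
      module
  | zero => simp
  | add x z _ _ hy hz =>
    convert add_mem hy hz using 1
    rw [map_add]; module
  | smul c x _ hx =>
    convert cone_smul_mem hx c.2 using 1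
    rw [NNReal.smul_def, map_smul, smul_eq_mul]
    change _ = (c : ℝ) • _
    module

/-- Half of the Minkowski-Weyl theorem: a polyhedral cone is finitely generated. -/
lemma minkowski_weyl {E : Type*} [AddCommGroup E] [Module ℝ E] [FiniteDimensional ℝ E]
    (F : Set (E →ₗ[ℝ] ℝ)) (hF : F.Finite) :
    ∃ G : Set E, G.Finite ∧ (∀ g ∈ G, ∀ f ∈ F, 0 ≤ f g) ∧
      ∀ x, (∀ f ∈ F, 0 ≤ f x) → x ∈ cone G := by
  induction F, hF using Set.Finite.induction_on with
  | empty =>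
    let b := Module.finBasis ℝ E
    refine ⟨Set.range b ∪ Set.range (fun i => - b i), (Set.finite_range _).union (Set.finite_range _),
      by simp, fun x _ => ?_⟩
    rw [← b.sum_repr x]
    refine sum_mem fun i _ => ?_
    rcases le_total 0 (b.repr x i) with h | h
    · have hm : b i ∈ Set.range b ∪ Set.range (fun i => - b i) := Or.inl ⟨i, rfl⟩
      exact cone_smul_mem (Submodule.subset_span hm) h
    · have : b.repr x i • b i = (- b.repr x i) • (- b i) := by simp
      rw [this]
      have hm : - b i ∈ Set.range b ∪ Set.range (fun i => - b i) := Or.inr ⟨i, rfl⟩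
      exact cone_smul_mem (Submodule.subset_span hm) (by linarith)
  | @insert ℓ F _ _ ih =>
    obtain ⟨G, hGf, hG, hx⟩ := ih
    let P : Set E := {g ∈ G | 0 ≤ ℓ g}
    let N : Set E := {g ∈ G | ℓ g < 0}
    have hP : P.Finite := hGf.subset (fun x h => h.1)
    have hN : N.Finite := hGf.subset (fun x h => h.1)
    refine ⟨P ∪ Set.image2 (fun g h => ℓ g • h - ℓ h • g) P N, hP.union (hP.image2 _ hN), ?_, ?_⟩
    · rintro g (hg | ⟨g, hg, h, hh, rfl⟩) f (rfl | hf)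
      · exact hg.2
      · exact hG g hg.1 f hf
      · simp [mul_comm]
      · have h1 := hG g hg.1 f hf
        have h2 := hG h hh.1 f hf
        have h3 := hg.2
        have h4 : ℓ h < 0 := hh.2
        simp only [map_sub, map_smul, smul_eq_mul]
        nlinarith [mul_nonneg h3 h2, mul_nonneg (neg_nonneg.2 h4.le) h1]
    · intro x hxF
      have h1 := hx x (fun f hf => hxF f (Or.inr hf))
      have h2 : G = P ∪ N := by
        ext g
        simp only [P, N, Set.mem_union, Set.mem_ofPred_eq]
        rcases le_or_gt 0 (ℓ g) with h | h
        · simp [h, not_lt.2 h]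
        · simp [h, not_le.2 h]
      rw [h2, cone, Submodule.span_union, Submodule.mem_sup] at h1
      obtain ⟨p, hp, q, hq, rfl⟩ := h1
      have hℓ : 0 ≤ ℓ p + ℓ q := by simpa using hxF ℓ (Or.inl rfl)
      set K := P ∪ Set.image2 (fun g h => ℓ g • h - ℓ h • g) P N
      have hpK : p ∈ cone K := Submodule.span_mono subset_union_left hp
      have hpos : 0 ≤ ℓ p := cone_pos ℓ (fun g hg => hg.2) hp
      rcases cone_neg ℓ (fun g hg => hg.2) hq with rfl | hneg
      · simpa using hpK
      · have hb : ℓ p • q - ℓ q • p ∈ cone K :=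
          cone_bilin ℓ (fun g hg h hh => Submodule.subset_span (Or.inr ⟨g, hg, h, hh, rfl⟩)) hp hq
        have hpp : 0 < ℓ p := by linarith
        have := add_mem (cone_smul_mem hb (inv_nonneg.2 hpos))
          (cone_smul_mem hpK (r := (ℓ p + ℓ q) / ℓ p) (by positivity))
        convert this using 1
        rw [smul_sub, smul_smul, smul_smul, inv_mul_cancel₀ hpp.ne', one_smul, add_div,
          div_self hpp.ne', add_smul, one_smul, div_eq_inv_mul]
        abel

lemma exists_basis_extending {E : Type*} [AddCommGroup E] [Module ℝ E] [FiniteDimensional ℝ E]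
    {d : ℕ} (v : Fin d → E) (hv : LinearIndependent ℝ v) :
    ∃ (e : ℕ) (b : Module.Basis (Fin d ⊕ Fin e) ℝ E), (∀ i, b (Sum.inl i) = v i) ∧
      ∀ w ∈ Submodule.span ℝ (Set.range v), ∀ j, b.repr w (Sum.inr j) = 0 := by
  obtain ⟨W', hW'⟩ := Submodule.exists_isCompl (Submodule.span ℝ (Set.range v))
  let b := ((Module.Basis.span hv).prod (Module.finBasis ℝ W')).map
    (Submodule.prodEquivOfIsCompl _ _ hW')
  have hb : ∀ i, b (Sum.inl i) = v i := by
    intro i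
    simp [b, Module.Basis.span_apply]
  refine ⟨_, b, hb, ?_⟩
  intro w hw j
  induction hw using Submodule.span_induction with
  | mem x h =>
    obtain ⟨i, rfl⟩ := h
    rw [← hb, b.repr_self]
    simp
  | zero => simp
  | add x y _ _ hx hy => simp [hx, hy]
  | smul c x _ hx => simp [hx]

/-- Feasible triples `(y, L, τ)` of the epigraph cone. -/
def Feas {n : ℕ} {ι : Type} (V : Finset (Fin n → ℝ)) (ℓ : ι → (Fin n → ℝ) →ₗ[ℝ] ℝ)
    (y : Fin n → ℝ) (L τ : ℝ) : Prop :=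
  (∀ i, 0 ≤ y i) ∧ (∀ v ∈ V, L ≤ ∑ i, v i * y i) ∧ 0 ≤ L ∧ ∀ s, ℓ s y ≤ τ

lemma Feas.smul {n : ℕ} {ι : Type} {V : Finset (Fin n → ℝ)} {ℓ : ι → (Fin n → ℝ) →ₗ[ℝ] ℝ}
    {y : Fin n → ℝ} {L τ : ℝ} (h : Feas V ℓ y L τ) {c : ℝ} (hc : 0 ≤ c) :
    Feas V ℓ (c • y) (c * L) (c * τ) := by
  obtain ⟨h1, h2, h3, h4⟩ := h
  refine ⟨fun i => mul_nonneg hc (h1 i), fun v hv => ?_, mul_nonneg hc h3, fun s => ?_⟩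
  · have := mul_le_mul_of_nonneg_left (h2 v hv) hc
    rw [Finset.mul_sum] at this
    refine this.trans (le_of_eq (Finset.sum_congr rfl fun i _ => ?_))
    simp; ring
  · rw [map_smul, smul_eq_mul]; exact mul_le_mul_of_nonneg_left (h4 s) hc

lemma Feas.add {n : ℕ} {ι : Type} {V : Finset (Fin n → ℝ)} {ℓ : ι → (Fin n → ℝ) →ₗ[ℝ] ℝ}
    {y y' : Fin n → ℝ} {L τ L' τ' : ℝ} (h : Feas V ℓ y L τ) (h' : Feas V ℓ y' L' τ') :
    Feas V ℓ (y + y') (L + L') (τ + τ') := by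
  obtain ⟨h1, h2, h3, h4⟩ := h
  obtain ⟨h1', h2', h3', h4'⟩ := h'
  refine ⟨fun i => add_nonneg (h1 i) (h1' i), fun v hv => ?_, add_nonneg h3 h3', fun s => ?_⟩
  · refine (add_le_add (h2 v hv) (h2' v hv)).trans (le_of_eq ?_)
    rw [← Finset.sum_add_distrib]
    refine Finset.sum_congr rfl fun i _ => ?_
    simp; ring
  · rw [map_add]; exact add_le_add (h4 s) (h4' s)

lemma Feas.sum {n : ℕ} {ι κ : Type} {V : Finset (Fin n → ℝ)} {ℓ : ι → (Fin n → ℝ) →ₗ[ℝ] ℝ}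
    (t : Finset κ) {y : κ → Fin n → ℝ} {L τ : κ → ℝ} (h : ∀ k ∈ t, Feas V ℓ (y k) (L k) (τ k)) :
    Feas V ℓ (∑ k ∈ t, y k) (∑ k ∈ t, L k) (∑ k ∈ t, τ k) := by
  classical
  induction t using Finset.induction_on with
  | empty => simp [Feas]
  | insert k t hk ih =>
    rw [Finset.sum_insert hk, Finset.sum_insert hk, Finset.sum_insert hk]
    exact (h k (Finset.mem_insert_self _ _)).add
      (ih fun k hk => h k (Finset.mem_insert_of_mem hk))

/-- The epigraph cone is finitely generated. -/
lemma feas_gen {n : ℕ} {ι : Type} [Finite ι] (V : Finset (Fin n → ℝ))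
    (ℓ : ι → (Fin n → ℝ) →ₗ[ℝ] ℝ) :
    ∃ G : Finset ((Fin n → ℝ) × ℝ × ℝ), (∀ g ∈ G, Feas V ℓ g.1 g.2.1 g.2.2) ∧
      ∀ y L τ, Feas V ℓ y L τ → ∃ f : ((Fin n → ℝ) × ℝ × ℝ) → ℝ, (∀ g, 0 ≤ f g) ∧
        y = ∑ g ∈ G, f g • g.1 ∧ L = ∑ g ∈ G, f g * g.2.1 ∧ τ = ∑ g ∈ G, f g * g.2.2 := by
  classical
  let f1 : Fin n → ((Fin n → ℝ) × ℝ × ℝ) →ₗ[ℝ] ℝ := fun i => LinearMap.proj i ∘ₗ LinearMap.fst ℝ _ _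
  let fL : ((Fin n → ℝ) × ℝ × ℝ) →ₗ[ℝ] ℝ := LinearMap.fst ℝ _ _ ∘ₗ LinearMap.snd ℝ _ _
  let fτ : ((Fin n → ℝ) × ℝ × ℝ) →ₗ[ℝ] ℝ := LinearMap.snd ℝ _ _ ∘ₗ LinearMap.snd ℝ _ _
  let f2 : (Fin n → ℝ) → ((Fin n → ℝ) × ℝ × ℝ) →ₗ[ℝ] ℝ := fun v => (∑ i, v i • f1 i) - fL
  let f4 : ι → ((Fin n → ℝ) × ℝ × ℝ) →ₗ[ℝ] ℝ := fun s => fτ - ℓ s ∘ₗ LinearMap.fst ℝ _ _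
  let F : Set (((Fin n → ℝ) × ℝ × ℝ) →ₗ[ℝ] ℝ) := (Set.range f1 ∪ f2 '' V) ∪ ({fL} ∪ Set.range f4)
  have hF : F.Finite := ((Set.finite_range _).union (V.finite_toSet.image _)).union
    ((Set.finite_singleton _).union (Set.finite_range _))
  have key : ∀ x : ((Fin n → ℝ) × ℝ × ℝ), (∀ f ∈ F, 0 ≤ f x) ↔ Feas V ℓ x.1 x.2.1 x.2.2 := by
    rintro ⟨y, L, τ⟩
    constructor
    · intro h
      refine ⟨fun i => ?_, fun v hv => ?_, ?_, fun s => ?_⟩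
      · exact h (f1 i) (Or.inl (Or.inl ⟨i, rfl⟩))
      · have := h (f2 v) (Or.inl (Or.inr ⟨v, hv, rfl⟩))
        simpa [f2, f1, fL] using this
      · exact h fL (Or.inr (Or.inl rfl))
      · have := h (f4 s) (Or.inr (Or.inr ⟨s, rfl⟩))
        simpa [f4, fτ] using this
    · rintro ⟨h1, h2, h3, h4⟩ f ((⟨i, rfl⟩ | ⟨v, hv, rfl⟩) | (rfl | ⟨s, rfl⟩))
      · exact h1 i
      · have := h2 v hv
        simpa [f2, f1, fL] using this
      · exact h3
      · have := h4 s
        simpa [f4, fτ] using this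
  obtain ⟨G, hGf, hG, hx⟩ := minkowski_weyl F hF
  refine ⟨hGf.toFinset, fun g hg => (key g).1 (hG g (hGf.mem_toFinset.1 hg)), ?_⟩
  intro y L τ h
  have := hx (y, L, τ) ((key _).2 h)
  rw [cone, ← hGf.coe_toFinset, Submodule.mem_span_finset] at this
  obtain ⟨f, -, hf⟩ := this
  refine ⟨fun g => f g, fun g => (f g).2, ?_, ?_, ?_⟩
  · have := congrArg Prod.fst hf
    rw [Prod.fst_sum] at this
    exact this.symm
  · have h2 := congrArg Prod.snd hf
    rw [Prod.snd_sum] at h2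
    have h3 := congrArg Prod.fst h2
    rw [Prod.fst_sum] at h3
    exact h3.symm
  · have h2 := congrArg Prod.snd hf
    rw [Prod.snd_sum] at h2
    have h3 := congrArg Prod.snd h2
    rw [Prod.snd_sum] at h3
    exact h3.symm

lemma structure_thm {n : ℕ} {ι : Type} [Finite ι] (V : Finset (Fin n → ℝ))
    (hVne : V.Nonempty) (hV1 : ∀ v ∈ V, 1 ≤ ∑ i, v i)
    (ℓ : ι → (Fin n → ℝ) →ₗ[ℝ] ℝ) (c0 : ℝ) (hc0 : 0 < c0)
    (hpos : ∀ (y : Fin n → ℝ) (τ : ℝ), (∀ i, 0 ≤ y i) → (∀ s, ℓ s y ≤ τ) → c0 * ∑ i, y i ≤ τ) :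
    ∃ a : ℝ, 0 < a ∧ ∃ d e : ℕ, d + e = n ∧ 1 ≤ e ∧ ∃ (p0 : Fin n → ℝ) (p : Fin d → Fin n → ℝ)
      (b : Module.Basis (Fin d ⊕ Fin e) ℝ (Fin n → ℝ)),
      Feas V ℓ p0 1 a ∧ (∀ i, Feas V ℓ (p i) 1 a) ∧ (∀ i, b (Sum.inl i) = p i - p0) ∧
      ∃ C : ℝ, 0 ≤ C ∧ ∀ y L τ, Feas V ℓ y L τ → a * L ≤ τ ∧
        (∀ i, |b.repr (y - L • p0) (Sum.inl i)| ≤ C * (L + (τ - a * L))) ∧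
        ∀ j, |b.repr (y - L • p0) (Sum.inr j)| ≤ C * (τ - a * L) := by
  classical
  obtain ⟨G, hG, hgen⟩ := feas_gen V ℓ
  -- a feasible point with `L = 1`
  obtain ⟨T, hT⟩ : ∃ T, ∀ s, ℓ s (fun _ => 1) ≤ T := by
    obtain ⟨T, hT⟩ := (Set.finite_range (fun s => ℓ s (fun _ => 1))).bddAbove
    exact ⟨T, fun s => hT ⟨s, rfl⟩⟩
  have hone : Feas V ℓ (fun _ => 1) 1 T :=
    ⟨fun _ => zero_le_one, fun v hv => by simpa using hV1 v hv, zero_le_one, hT⟩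
  have hG1 : (G.filter (fun g => 0 < g.2.1)).Nonempty := by
    by_contra hne
    rw [Finset.not_nonempty_iff_eq_empty, Finset.filter_eq_empty_iff] at hne
    obtain ⟨f, hf, -, h1, -⟩ := hgen _ _ _ hone
    have : ∑ g ∈ G, f g * g.2.1 ≤ 0 := Finset.sum_nonpos fun g hg =>
      mul_nonpos_of_nonneg_of_nonpos (hf g) (not_lt.1 (hne hg))
    linarith
  obtain ⟨g0, hg0, hmin⟩ := Finset.exists_min_image _ (fun g => g.2.2 / g.2.1) hG1
  rw [Finset.mem_filter] at hg0
  obtain ⟨hg0G, hg0L⟩ := hg0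
  obtain ⟨v0, hv0⟩ := hVne
  set a := g0.2.2 / g0.2.1 with ha
  have hsumpos : ∀ y L τ, Feas V ℓ y L τ → 0 < L → 0 < ∑ i, y i := by
    intro y L τ h hL
    have hnn : 0 ≤ ∑ i, y i := Finset.sum_nonneg fun i _ => h.1 i
    rcases hnn.eq_or_lt with h0 | h0
    · exfalso
      have hz := (Finset.sum_eq_zero_iff_of_nonneg (fun i _ => h.1 i)).1 h0.symm
      have := h.2.1 v0 hv0
      rw [Finset.sum_eq_zero (fun i hi => by rw [hz i hi, mul_zero])] at this
      linarith
    · exact h0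
  have hτpos : ∀ y L τ, Feas V ℓ y L τ → 0 ≤ τ := by
    intro y L τ h
    exact le_trans (mul_nonneg hc0.le (Finset.sum_nonneg fun i _ => h.1 i)) (hpos y τ h.1 h.2.2.2)
  have hapos : 0 < a := by
    have h := hG g0 hg0G
    have h1 := hsumpos _ _ _ h hg0L
    have h2 := hpos _ _ h.1 h.2.2.2
    exact div_pos (lt_of_lt_of_le (mul_pos hc0 h1) h2) hg0L
  have hGa : ∀ g ∈ G, a * g.2.1 ≤ g.2.2 := by
    intro g hg
    have h := hG g hg
    rcases h.2.2.1.eq_or_lt with h0 | h0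
    · rw [← h0, mul_zero]; exact hτpos _ _ _ h
    · have := hmin g (Finset.mem_filter.2 ⟨hg, h0⟩)
      rwa [le_div_iff₀ h0] at this
  have hall : ∀ y L τ, Feas V ℓ y L τ → a * L ≤ τ := by
    intro y L τ h
    obtain ⟨f, hf, -, rfl, rfl⟩ := hgen _ _ _ h
    rw [Finset.mul_sum]
    refine Finset.sum_le_sum fun g hg => ?_
    have := mul_le_mul_of_nonneg_left (hGa g hg) (hf g)
    linarith
  -- normalised points
  let pt : ((Fin n → ℝ) × ℝ × ℝ) → Fin n → ℝ := fun g => (g.2.1)⁻¹ • g.1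
  let A := {g ∈ G | 0 < g.2.1 ∧ g.2.2 = a * g.2.1}
  have hA : ∀ g ∈ A, Feas V ℓ (pt g) 1 a := by
    intro g hg
    obtain ⟨h1, h2, h3⟩ := Finset.mem_filter.1 hg
    have := (hG g h1).smul (inv_nonneg.2 h2.le)
    rwa [inv_mul_cancel₀ h2.ne', h3, mul_comm a, inv_mul_cancel_left₀ h2.ne'] at this
  have hg0A : g0 ∈ A := Finset.mem_filter.2 ⟨hg0G, hg0L, by rw [ha, div_mul_cancel₀ _ hg0L.ne']⟩
  set p0 := pt g0 with hp0
  let Tset : Set (Fin n → ℝ) := (fun g => pt g - p0) '' A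
  obtain ⟨d, f, hf, hfspan, hfli⟩ : ∃ (d : ℕ) (f : Fin d → Fin n → ℝ), (∀ i, f i ∈ Tset) ∧
      Submodule.span ℝ (Set.range f) = Submodule.span ℝ Tset ∧ LinearIndependent ℝ f :=
    ⟨_, Submodule.exists_fun_fin_finrank_span_eq ℝ Tset⟩
  obtain ⟨e, b, hb, hb0⟩ := exists_basis_extending f hfli
  have hde : d + e = n := by
    have := Module.finrank_eq_card_basis b
    simpa using this.symm
  have hp0F : Feas V ℓ p0 1 a := hA g0 hg0A
  choose gi hgi hgi' using hf
  have hpF : ∀ i, Feas V ℓ (pt (gi i)) 1 a := fun i => hA _ (hgi i)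
  have hbi : ∀ i, b (Sum.inl i) = pt (gi i) - p0 := fun i => by rw [hb, ← hgi' i]
  refine ⟨a, hapos, d, e, hde, ?_, p0, fun i => pt (gi i), b, hp0F, hpF, hbi, ?_⟩
  · by_contra he
    have he : e = 0 := by omega
    subst he
    -- barycentre
    let q : Fin n → ℝ := p0 + ∑ i, pt (gi i)
    have hq : Feas V ℓ q (1 + ∑ i : Fin d, 1) (a + ∑ i : Fin d, a) :=
      hp0F.add (Feas.sum _ fun i _ => hpF i)
    have hqs : (1 + ∑ i : Fin d, (1:ℝ)) = d + 1 := by simp; ring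
    have hqs' : (a + ∑ i : Fin d, a) = a * (d + 1) := by simp; ring
    rw [hqs, hqs'] at hq
    obtain ⟨v, hv, hvq⟩ : ∃ v ∈ V, ∑ i, v i * q i ≤ d + 1 := by
      by_contra! hcon
      obtain ⟨v1, hv1, hv1min⟩ := Finset.exists_min_image V (fun v => ∑ i, v i * q i) ⟨v0, hv0⟩
      have hq' : Feas V ℓ q (∑ i, v1 i * q i) (a * (d + 1)) :=
        ⟨hq.1, hv1min, (lt_trans (by positivity) (hcon v1 hv1)).le, hq.2.2.2⟩
      have h1 := hall _ _ _ hq'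
      have h2 := hcon v1 hv1
      nlinarith
    have hlin : ∑ i, v i * q i = (∑ i, v i * p0 i) + ∑ k, ∑ i, v i * pt (gi k) i := by
      rw [Finset.sum_comm, ← Finset.sum_add_distrib]
      refine Finset.sum_congr rfl fun i _ => ?_
      rw [← Finset.mul_sum, ← mul_add]
      simp [q]
    have hge0 : 1 ≤ ∑ i, v i * p0 i := hp0F.2.1 v hv
    have hgek : ∀ k, 1 ≤ ∑ i, v i * pt (gi k) i := fun k => (hpF k).2.1 v hv
    have hsumge : (d : ℝ) ≤ ∑ k, ∑ i, v i * pt (gi k) i := by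
      have := Finset.sum_le_sum (s := Finset.univ) fun k _ => hgek k
      simpa using this
    have h0eq : ∑ i, v i * p0 i = 1 := by linarith
    have hkeq : ∀ k, ∑ i, v i * pt (gi k) i = 1 := by
      have h1 : ∑ k : Fin d, (∑ i, v i * pt (gi k) i - 1) = 0 := by
        rw [Finset.sum_sub_distrib]; simp; linarith
      intro k
      have := (Finset.sum_eq_zero_iff_of_nonneg (fun k _ => sub_nonneg.2 (hgek k))).1 h1 k
        (Finset.mem_univ _)
      linarith
    let lv : (Fin n → ℝ) →ₗ[ℝ] ℝ := ∑ i, v i • LinearMap.proj i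
    have hlv : ∀ y, lv y = ∑ i, v i * y i := by intro y; simp [lv]
    have hzero : lv = 0 := by
      refine b.ext fun k => ?_
      rcases k with k | k
      · rw [hbi, map_sub, hlv, hlv, hkeq, h0eq]; simp
      · exact k.elim0
    have := hlv p0
    rw [hzero, h0eq] at this
    simp at this
  · -- the bounds
    have hper : ∀ g ∈ G, ∃ C : ℝ, 0 ≤ C ∧
        (∀ i, |b.repr (g.1 - g.2.1 • p0) (Sum.inl i)| ≤ C * (g.2.1 + (g.2.2 - a * g.2.1))) ∧
        ∀ j, |b.repr (g.1 - g.2.1 • p0) (Sum.inr j)| ≤ C * (g.2.2 - a * g.2.1) := by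
      intro g hg
      have hF := hG g hg
      set M := ∑ k, |b.repr (g.1 - g.2.1 • p0) k| with hM
      have hMk : ∀ k, |b.repr (g.1 - g.2.1 • p0) k| ≤ M := fun k =>
        Finset.single_le_sum (f := fun k => |b.repr (g.1 - g.2.1 • p0) k|)
          (fun _ _ => abs_nonneg _) (Finset.mem_univ k)
      have hM0 : 0 ≤ M := Finset.sum_nonneg fun _ _ => abs_nonneg _
      have hψ : 0 ≤ g.2.2 - a * g.2.1 := sub_nonneg.2 (hGa g hg)
      have hL := hF.2.2.1
      rcases hψ.eq_or_lt with h0 | h0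
      · rcases hL.eq_or_lt with hL0 | hL0
        · -- g.1 = 0
          have hτ0 : g.2.2 = 0 := by rw [← hL0] at h0; linarith
          have h1 := hpos _ _ hF.1 hF.2.2.2
          rw [hτ0] at h1
          have h2 : ∑ i, g.1 i = 0 := le_antisymm (by nlinarith) (Finset.sum_nonneg fun i _ => hF.1 i)
          have h3 : g.1 = 0 := by
            ext i
            exact (Finset.sum_eq_zero_iff_of_nonneg (fun i _ => hF.1 i)).1 h2 i (Finset.mem_univ _)
          refine ⟨0, le_rfl, ?_, ?_⟩ <;> · intro i; rw [h3, ← hL0]; simp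
        · refine ⟨M / g.2.1, by positivity, fun i => ?_, fun j => ?_⟩
          · rw [← h0, add_zero, div_mul_cancel₀ _ hL0.ne']; exact hMk _
          · rw [← h0, mul_zero]
            have hgA : g ∈ A := Finset.mem_filter.2 ⟨hg, hL0, by linarith⟩
            have h1 : g.1 - g.2.1 • p0 = g.2.1 • (pt g - p0) := by
              simp only [pt]
              rw [smul_sub]
              congr 1
              exact (smul_inv_smul₀ hL0.ne' _).symm
            have h2 : pt g - p0 ∈ Submodule.span ℝ (Set.range f) := by
              rw [hfspan]; exact Submodule.subset_span ⟨g, hgA, rfl⟩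
            rw [hb0 _ (by rw [h1]; exact Submodule.smul_mem _ _ h2) j]
            simp
      · refine ⟨M / (g.2.2 - a * g.2.1), by positivity, fun i => ?_, fun j => ?_⟩
        · rw [mul_add, div_mul_cancel₀ _ h0.ne']
          exact (hMk _).trans (le_add_of_nonneg_left (by positivity))
        · rw [div_mul_cancel₀ _ h0.ne']; exact hMk _
    choose! Cg hCg0 hCg1 hCg2 using hper
    set C := ∑ g ∈ G, Cg g
    have hCle : ∀ g ∈ G, Cg g ≤ C := fun g hg =>
      Finset.single_le_sum (f := Cg) (fun g hg => hCg0 g hg) hg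
    refine ⟨C, Finset.sum_nonneg hCg0, fun y L τ h => ⟨hall _ _ _ h, ?_⟩⟩
    obtain ⟨φ, hφ, hy, hL, hτ⟩ := hgen _ _ _ h
    have hdec : y - L • p0 = ∑ g ∈ G, φ g • (g.1 - g.2.1 • p0) := by
      rw [hy, hL, Finset.sum_smul, ← Finset.sum_sub_distrib]
      refine Finset.sum_congr rfl fun g _ => ?_
      module
    have habs : ∀ k, |b.repr (y - L • p0) k| ≤
        ∑ g ∈ G, φ g * |b.repr (g.1 - g.2.1 • p0) k| := by
      intro k
      rw [hdec, map_sum, Finsupp.finsetSum_apply]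
      refine (Finset.abs_sum_le_sum_abs _ _).trans (le_of_eq (Finset.sum_congr rfl fun g _ => ?_))
      rw [map_smul, Finsupp.smul_apply, smul_eq_mul, abs_mul, abs_of_nonneg (hφ g)]
    have hψs : τ - a * L = ∑ g ∈ G, φ g * (g.2.2 - a * g.2.1) := by
      rw [hτ, hL, Finset.mul_sum, ← Finset.sum_sub_distrib]
      refine Finset.sum_congr rfl fun g _ => ?_
      ring
    constructor
    · intro i
      have : C * (L + (τ - a * L)) = ∑ g ∈ G, φ g * (C * (g.2.1 + (g.2.2 - a * g.2.1))) := by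
        rw [hψs]
        nth_rewrite 1 [hL]
        rw [← Finset.sum_add_distrib, Finset.mul_sum]
        refine Finset.sum_congr rfl fun g _ => ?_
        ring
      rw [this]
      refine (habs _).trans (Finset.sum_le_sum fun g hg => ?_)
      refine mul_le_mul_of_nonneg_left ((hCg1 g hg i).trans ?_) (hφ g)
      exact mul_le_mul_of_nonneg_right (hCle g hg)
        (add_nonneg (hG g hg).2.2.1 (sub_nonneg.2 (hGa g hg)))
    · intro j
      have : C * (τ - a * L) = ∑ g ∈ G, φ g * (C * (g.2.2 - a * g.2.1)) := by
        rw [hψs, Finset.mul_sum]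
        refine Finset.sum_congr rfl fun g _ => ?_
        ring
      rw [this]
      refine (habs _).trans (Finset.sum_le_sum fun g hg => ?_)
      refine mul_le_mul_of_nonneg_left ((hCg2 g hg j).trans ?_) (hφ g)
      exact mul_le_mul_of_nonneg_right (hCle g hg) (sub_nonneg.2 (hGa g hg))

lemma vol_basis {n : ℕ} {κ : Type} [Fintype κ] (b : Module.Basis κ ℝ (Fin n → ℝ)) :
    ∃ c : ℝ, 0 < c ∧ ∀ lo hi : κ → ℝ,
      MeasurableSet {y | ∀ k, lo k ≤ b.repr y k ∧ b.repr y k ≤ hi k} ∧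
      volume {y | ∀ k, lo k ≤ b.repr y k ∧ b.repr y k ≤ hi k} =
        ENNReal.ofReal c * ∏ k, ENNReal.ofReal (hi k - lo k) := by
  let f := b.equivFun.toContinuousLinearEquiv
  have hf : Measurable f := f.continuous.measurable
  have h1 := Measure.isAddLeftInvariant_eq_smul ((volume : Measure (Fin n → ℝ)).map f)
    (volume : Measure (κ → ℝ))
  have h2 := Measure.addHaarScalarFactor_pos_of_isAddHaarMeasure
    ((volume : Measure (Fin n → ℝ)).map f) (volume : Measure (κ → ℝ))
  set c := Measure.addHaarScalarFactor ((volume : Measure (Fin n → ℝ)).map f)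
    (volume : Measure (κ → ℝ))
  refine ⟨c, by exact_mod_cast h2, fun lo hi => ?_⟩
  have hset : {y | ∀ k, lo k ≤ b.repr y k ∧ b.repr y k ≤ hi k} = f ⁻¹' (Set.Icc lo hi) := by
    ext y
    simp only [Set.mem_ofPred_eq, Set.mem_preimage, Set.mem_Icc, Pi.le_def, ← forall_and]
    rfl
  rw [hset]
  refine ⟨hf measurableSet_Icc, ?_⟩
  rw [← Measure.map_apply hf measurableSet_Icc, h1, Measure.smul_apply, Real.volume_Icc_pi,
    ENNReal.ofReal_coe_nnreal]
  rfl

lemma upper_bound {n : ℕ} {ι : Type} (V : Finset (Fin n → ℝ))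
    (ℓ : ι → (Fin n → ℝ) →ₗ[ℝ] ℝ) (a : ℝ) (d e : ℕ) (hde : d + e = n) (p0 : Fin n → ℝ)
    (b : Module.Basis (Fin d ⊕ Fin e) ℝ (Fin n → ℝ)) (C : ℝ) (hC : 0 ≤ C)
    (hb : ∀ y L τ, Feas V ℓ y L τ → a * L ≤ τ ∧
        (∀ i, |b.repr (y - L • p0) (Sum.inl i)| ≤ C * (L + (τ - a * L))) ∧
        ∀ j, |b.repr (y - L • p0) (Sum.inr j)| ≤ C * (τ - a * L))
    (h : (Fin n → ℝ) → ℝ) (hh : ∀ y, (∀ i, 0 < y i) → 0 < h y ∧ ∀ s, h y ≤ Real.exp (-ℓ s y)) :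
    ∃ B : ℝ, 0 < B ∧ ∀ L : ℝ, 1 / 2 ≤ L →
      ∫⁻ y in {y | (∀ i, 0 < y i) ∧ ∀ v ∈ V, L ≤ ∑ i, v i * y i}, ENNReal.ofReal (h y) ≤
        ENNReal.ofReal (B * Real.exp (-(a * L)) * L ^ d) := by
  obtain ⟨κ, hκ, hvol⟩ := vol_basis b
  have hsum : Summable (fun k : ℕ => Real.exp (-(k : ℝ)) * ((k : ℝ) + 1) ^ n) := by
    have h1 := (summable_nat_add_iff 1).2 (Real.summable_pow_mul_exp_neg_nat_mul n one_pos)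
    refine (h1.mul_left (Real.exp 1)).congr fun k => ?_
    push_cast
    rw [mul_left_comm, ← Real.exp_add, mul_comm]
    congr 2; ring
  set Sg := ∑' k : ℕ, Real.exp (-(k : ℝ)) * ((k : ℝ) + 1) ^ n with hSg
  have hSg0 : 0 ≤ Sg := tsum_nonneg fun k => by positivity
  refine ⟨κ * (6 * C) ^ n * Sg + 1, by positivity, fun L hL => ?_⟩
  have hL0 : 0 < L := by linarith
  set D := {y : Fin n → ℝ | (∀ i, 0 < y i) ∧ ∀ v ∈ V, L ≤ ∑ i, v i * y i} with hD
  let τ : (Fin n → ℝ) → ℝ := fun y => -Real.log (h y)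
  let Dk : ℕ → Set (Fin n → ℝ) := fun k =>
    {y | y ∈ D ∧ a * L + k ≤ τ y ∧ τ y ≤ a * L + k + 1}
  have hfeas : ∀ y ∈ D, Feas V ℓ y L (τ y) := by
    intro y hy
    refine ⟨fun i => (hy.1 i).le, hy.2, hL0.le, fun s => ?_⟩
    have h1 := hh y hy.1
    have h2 := Real.log_le_log h1.1 (h1.2 s)
    rw [Real.log_exp] at h2
    simp only [τ]; linarith
  have hsub : D ⊆ ⋃ k, Dk k := by
    intro y hy
    have h1 := (hb _ _ _ (hfeas y hy)).1
    refine Set.mem_iUnion.2 ⟨⌊τ y - a * L⌋₊, hy, ?_, ?_⟩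
    · have := Nat.floor_le (sub_nonneg.2 h1); linarith
    · have := Nat.lt_floor_add_one (τ y - a * L); linarith
  have hk : ∀ k : ℕ, ∫⁻ y in Dk k, ENNReal.ofReal (h y) ≤
      ENNReal.ofReal (κ * (6 * C) ^ n * Real.exp (-(a * L)) * L ^ d *
        (Real.exp (-(k : ℝ)) * ((k : ℝ) + 1) ^ n)) := by
    intro k
    have h1 : ∫⁻ y in Dk k, ENNReal.ofReal (h y) ≤
        ENNReal.ofReal (Real.exp (-(a * L) + -(k : ℝ))) * volume (Dk k) := by
      rw [← setLIntegral_const]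
      refine setLIntegral_mono measurable_const fun y hy => ?_
      refine ENNReal.ofReal_le_ofReal ?_
      have h2 : h y = Real.exp (-τ y) := by
        simp only [τ, neg_neg]; rw [Real.exp_log (hh y hy.1.1).1]
      rw [h2]
      refine Real.exp_le_exp.2 ?_
      have := hy.2.1
      linarith
    refine h1.trans ?_
    let R : Fin d ⊕ Fin e → ℝ := Sum.elim (fun _ => C * (L + (k + 1))) (fun _ => C * (k + 1))
    have h3 : Dk k ⊆ {y | ∀ i, b.repr (L • p0) i - R i ≤ b.repr y i ∧
        b.repr y i ≤ b.repr (L • p0) i + R i} := by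
      intro y hy i
      obtain ⟨-, h4, h5⟩ := hb _ _ _ (hfeas y hy.1)
      have h6 : |b.repr (y - L • p0) i| ≤ R i := by
        have hy2 := hy.2.2
        rcases i with i | i
        · refine (h4 i).trans (mul_le_mul_of_nonneg_left ?_ hC)
          linarith
        · refine (h5 i).trans (mul_le_mul_of_nonneg_left ?_ hC)
          linarith
      rw [map_sub, Finsupp.sub_apply, abs_le] at h6
      constructor <;> linarith [h6.1, h6.2]
    have hR : ∏ i, ENNReal.ofReal (b.repr (L • p0) i + R i - (b.repr (L • p0) i - R i)) =
        ENNReal.ofReal ((2 * (C * (L + (k + 1)))) ^ d * (2 * (C * (k + 1))) ^ e) := by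
      rw [← ENNReal.ofReal_prod_of_nonneg]
      · congr 1
        have : ∀ i, b.repr (L • p0) i + R i - (b.repr (L • p0) i - R i) = 2 * R i :=
          fun i => by ring
        simp only [this, Fintype.prod_sum_type, R, Sum.elim_inl, Sum.elim_inr, Finset.prod_const,
          Finset.card_univ, Fintype.card_fin]
      · intro i _
        have : 0 ≤ R i := by rcases i with i | i <;> simp only [R, Sum.elim_inl, Sum.elim_inr] <;> positivity
        linarith
    have h4 : volume (Dk k) ≤ ENNReal.ofReal (κ * (6 * C) ^ n * L ^ d * ((k : ℝ) + 1) ^ n) := by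
      refine (measure_mono h3).trans ?_
      rw [(hvol _ _).2, hR, ← ENNReal.ofReal_mul hκ.le]
      refine ENNReal.ofReal_le_ofReal ?_
      have e1 : κ * (6 * C) ^ n * L ^ d * ((k : ℝ) + 1) ^ n =
        κ * ((6 * C * L * (k + 1)) ^ d * (6 * C * (k + 1)) ^ e) := by
        have e0 : ∀ x : ℝ, x ^ n = x ^ d * x ^ e := fun x => by rw [← pow_add, hde]
        rw [e0, e0]; simp only [mul_pow]; ring
      rw [e1]
      refine mul_le_mul_of_nonneg_left ?_ hκ.le
      have hk0 : (0 : ℝ) ≤ k := k.cast_nonneg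
      have e2 : 2 * (C * (L + ((k : ℝ) + 1))) ≤ 6 * C * L * (k + 1) := by
        have : L + ((k : ℝ) + 1) ≤ 3 * (L * (k + 1)) := by nlinarith
        nlinarith
      have e3 : 2 * (C * ((k : ℝ) + 1)) ≤ 6 * C * (k + 1) := by nlinarith [mul_nonneg hC (by positivity : (0:ℝ) ≤ k + 1)]
      gcongr
    refine (mul_le_mul_right h4 _).trans (le_of_eq ?_)
    rw [← ENNReal.ofReal_mul (Real.exp_pos _).le, Real.exp_add]
    congr 1
    ring
  calc ∫⁻ y in D, ENNReal.ofReal (h y) ≤ ∫⁻ y in ⋃ k, Dk k, ENNReal.ofReal (h y) :=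
        lintegral_mono_set hsub
    _ ≤ ∑' k, ∫⁻ y in Dk k, ENNReal.ofReal (h y) := lintegral_iUnion_le _ _
    _ ≤ ∑' k : ℕ, ENNReal.ofReal (κ * (6 * C) ^ n * Real.exp (-(a * L)) * L ^ d *
        (Real.exp (-(k : ℝ)) * ((k : ℝ) + 1) ^ n)) := ENNReal.tsum_le_tsum hk
    _ = ENNReal.ofReal (κ * (6 * C) ^ n * Real.exp (-(a * L)) * L ^ d * Sg) := by
        rw [← ENNReal.ofReal_tsum_of_nonneg (fun k => by positivity) (hsum.mul_left _),
          tsum_mul_left]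
    _ ≤ _ := by
        refine ENNReal.ofReal_le_ofReal ?_
        have : 0 ≤ Real.exp (-(a * L)) * L ^ d := by positivity
        nlinarith

lemma lower_bound {n : ℕ} {ι : Type} [Fintype ι] (V : Finset (Fin n → ℝ))
    (hV0 : ∀ v ∈ V, ∀ i, 0 ≤ v i) (hV1 : ∀ v ∈ V, 1 ≤ ∑ i, v i)
    (ℓ : ι → (Fin n → ℝ) →ₗ[ℝ] ℝ) (a : ℝ) (d e : ℕ) (p0 : Fin n → ℝ)
    (p : Fin d → Fin n → ℝ)
    (b : Module.Basis (Fin d ⊕ Fin e) ℝ (Fin n → ℝ))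
    (hp0 : Feas V ℓ p0 1 a) (hp : ∀ i, Feas V ℓ (p i) 1 a)
    (hbi : ∀ i, b (Sum.inl i) = p i - p0)
    (h : (Fin n → ℝ) → ℝ) (c : ℝ) (hc : 0 < c)
    (hh : ∀ y, (∀ i, 0 < y i) → ∃ s, c * Real.exp (-ℓ s y) ≤ h y) (ρ lam : ℝ) (hρ : 0 ≤ ρ)
    (hlam : 0 ≤ lam) :
    ∃ β : ℝ, 0 < β ∧ ∀ L : ℝ, 0 < L →
      ENNReal.ofReal (β * Real.exp (-(a * L)) * L ^ d) ≤
      ∫⁻ y in {y | (∀ i, ρ < y i) ∧ ∀ v ∈ V, L + lam < ∑ i, v i * y i}, ENNReal.ofReal (h y) := by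
  obtain ⟨κ, hκ, hvol⟩ := vol_basis b
  set M := ∑ j, ∑ i, |b (Sum.inr j) i| with hM
  have hM0 : 0 ≤ M := Finset.sum_nonneg fun _ _ => Finset.sum_nonneg fun _ _ => abs_nonneg _
  set K := ρ + lam + 1 + M with hK
  set N := ∑ s, ∑ i, |ℓ s (Pi.single i 1)| * (K + M) with hN
  let q0 : Fin n → ℝ := fun _ => K
  refine ⟨c * Real.exp (-N) * κ * (1 / (d + 1)) ^ d, by positivity, fun L hL => ?_⟩
  let R : Fin d ⊕ Fin e → ℝ := Sum.elim (fun _ => L * (1 / (d + 1))) (fun _ => 1)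
  let o := L • p0 + q0
  let Box := {y | ∀ k, b.repr o k ≤ b.repr y k ∧ b.repr y k ≤ b.repr o k + R k}
  have hBm : MeasurableSet Box := (hvol _ _).1
  have hBv : volume Box = ENNReal.ofReal (κ * (L * (1 / (d + 1))) ^ d) := by
    rw [(hvol _ _).2, ← ENNReal.ofReal_prod_of_nonneg, ← ENNReal.ofReal_mul hκ.le]
    · congr 2
      simp only [add_sub_cancel_left, Fintype.prod_sum_type, R, Sum.elim_inl, Sum.elim_inr,
        Finset.prod_const, Finset.card_univ, Fintype.card_fin, one_pow, mul_one]
    · intro i _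
      rw [add_sub_cancel_left]
      rcases i with i | i <;> simp only [R, Sum.elim_inl, Sum.elim_inr] <;> positivity
  have hmain : ∀ y ∈ Box, ((∀ i, ρ < y i) ∧ ∀ v ∈ V, L + lam < ∑ i, v i * y i) ∧
      ∀ s, ℓ s y ≤ a * L + N := by
    intro y hy
    set x : Fin d → ℝ := fun i => b.repr (y - o) (Sum.inl i) with hx
    set z : Fin e → ℝ := fun j => b.repr (y - o) (Sum.inr j) with hz
    have hxb : ∀ i, 0 ≤ x i ∧ x i ≤ L * (1 / (d + 1)) := by
      intro i
      have := hy (Sum.inl i)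
      simp only [R, Sum.elim_inl] at this
      simp only [hx, map_sub, Finsupp.sub_apply]
      constructor <;> linarith [this.1, this.2]
    have hzb : ∀ i, 0 ≤ z i ∧ z i ≤ 1 := by
      intro i
      have := hy (Sum.inr i)
      simp only [R, Sum.elim_inr] at this
      simp only [hz, map_sub, Finsupp.sub_apply]
      constructor <;> linarith [this.1, this.2]
    have hsx : ∑ i, x i ≤ L := by
      have h1 : ∑ i, x i ≤ ∑ i : Fin d, L * (1 / (d + 1)) :=
        Finset.sum_le_sum fun i _ => (hxb i).2
      refine h1.trans ?_
      simp only [Finset.sum_const, Finset.card_univ, Fintype.card_fin, nsmul_eq_mul]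
      rw [mul_left_comm]
      have : (d : ℝ) * (1 / (d + 1)) ≤ 1 := by
        rw [mul_one_div, div_le_one (by positivity)]; linarith
      nlinarith
    set w : Fin n → ℝ := (L - ∑ i, x i) • p0 + ∑ i, x i • p i with hw
    set u : Fin n → ℝ := q0 + ∑ j, z j • b (Sum.inr j) with hu
    have hyw : y = w + u := by
      have h1 := b.sum_repr (y - o)
      rw [Fintype.sum_sum_type] at h1
      have h2 : ∑ i, b.repr (y - o) (Sum.inl i) • b (Sum.inl i) =
          ∑ i, x i • p i - (∑ i, x i) • p0 := by
        rw [Finset.sum_smul, ← Finset.sum_sub_distrib]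
        refine Finset.sum_congr rfl fun i _ => ?_
        rw [hbi, smul_sub]
      rw [h2] at h1
      have h3 : y = o + (y - o) := by abel
      rw [h3, ← h1, hw, hu, sub_smul]
      simp only [o, hz]
      abel
    have hwF : Feas V ℓ w L (a * L) := by
      have h1 := (hp0.smul (sub_nonneg.2 hsx)).add
        (Feas.sum Finset.univ fun i _ => (hp i).smul (hxb i).1)
      convert h1 using 1
      · simp
      · rw [← Finset.sum_mul]; ring
    have hub : ∀ i, ρ + lam + 1 ≤ u i ∧ |u i| ≤ K + M := by
      intro i
      have h1 : |∑ j, z j * b (Sum.inr j) i| ≤ M := by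
        refine (Finset.abs_sum_le_sum_abs _ _).trans (Finset.sum_le_sum fun j _ => ?_)
        rw [abs_mul, abs_of_nonneg (hzb j).1]
        have h2 : |b (Sum.inr j) i| ≤ ∑ i, |b (Sum.inr j) i| :=
          Finset.single_le_sum (f := fun i => |b (Sum.inr j) i|) (fun _ _ => abs_nonneg _)
            (Finset.mem_univ i)
        have h3 := mul_le_mul_of_nonneg_right (hzb j).2 (abs_nonneg (b (Sum.inr j) i))
        linarith
      have h2 : u i = K + ∑ j, z j * b (Sum.inr j) i := by
        simp [hu, q0]
      rw [abs_le] at h1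
      rw [h2, abs_le]
      refine ⟨?_, ?_, ?_⟩ <;> linarith [h1.1, h1.2]
    refine ⟨⟨fun i => ?_, fun v hv => ?_⟩, fun s => ?_⟩
    · have h1 := hwF.1 i
      have h2 := (hub i).1
      rw [hyw, Pi.add_apply]; linarith
    · have h1 := hwF.2.1 v hv
      have h2 : (ρ + lam + 1) * 1 ≤ ∑ i, v i * u i := by
        refine (mul_le_mul_of_nonneg_left (hV1 v hv) (by positivity)).trans ?_
        rw [Finset.mul_sum]
        refine Finset.sum_le_sum fun i _ => ?_
        rw [mul_comm]
        exact mul_le_mul_of_nonneg_left (hub i).1 (hV0 v hv i)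
      have h3 : ∑ i, v i * y i = ∑ i, v i * w i + ∑ i, v i * u i := by
        rw [← Finset.sum_add_distrib]
        refine Finset.sum_congr rfl fun i _ => ?_
        rw [hyw, Pi.add_apply]; ring
      rw [h3]; linarith
    · have h1 := hwF.2.2.2 s
      have h2 : ℓ s u ≤ N := by
        have h3 : ℓ s u = ∑ i, u i * ℓ s (Pi.single i 1) := by
          rw [LinearMap.pi_apply_eq_sum_univ (ℓ s) u]
          refine Finset.sum_congr rfl fun i _ => ?_
          rw [smul_eq_mul]
          congr 2
          ext j
          simp [Pi.single_apply, eq_comm]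
        rw [h3]
        refine le_trans ?_ (Finset.single_le_sum
          (f := fun s => ∑ i, |ℓ s (Pi.single i 1)| * (K + M))
          (fun s _ => Finset.sum_nonneg fun i _ => by positivity) (Finset.mem_univ s))
        refine Finset.sum_le_sum fun i _ => ?_
        refine (le_abs_self _).trans ?_
        rw [abs_mul, mul_comm]
        exact mul_le_mul_of_nonneg_left (hub i).2 (abs_nonneg _)
      rw [hyw, map_add]; linarith
  have hsub : Box ⊆ {y | (∀ i, ρ < y i) ∧ ∀ v ∈ V, L + lam < ∑ i, v i * y i} :=
    fun y hy => (hmain y hy).1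
  refine le_trans ?_ (lintegral_mono_set hsub)
  have hconst : ∫⁻ y in Box, ENNReal.ofReal (c * Real.exp (-(a * L + N))) ≤
      ∫⁻ y in Box, ENNReal.ofReal (h y) := by
    refine setLIntegral_mono' hBm fun y hy => ENNReal.ofReal_le_ofReal ?_
    obtain ⟨h1, h2⟩ := hmain y hy
    obtain ⟨s, hs⟩ := hh y (fun i => lt_of_le_of_lt hρ (h1.1 i))
    refine le_trans (mul_le_mul_of_nonneg_left (Real.exp_le_exp.2 ?_) hc.le) hs
    linarith [h2 s]
  refine le_trans (le_of_eq ?_) hconst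
  rw [setLIntegral_const, hBv, ← ENNReal.ofReal_mul (by positivity)]
  congr 1
  rw [mul_pow, neg_add, Real.exp_add]
  ring

lemma vertex_eq {n : ℕ} {c : (Fin n → ℕ) → ℝ} {x : Fin n → ℝ} (hx : x ∈ newtonVertices c)
    {α : Fin n → ℕ} (hα : c α ≠ 0) (hle : ∀ i, (α i : ℝ) ≤ x i) :
    x = fun i => (α i : ℝ) := by
  have h1 : (fun i => (α i : ℝ)) ∈ newtonPolyhedron c :=
    subset_convexHull ℝ _ ⟨α, hα, fun i => le_rfl⟩
  have h2 : (fun i => 2 * x i - (α i : ℝ)) ∈ newtonPolyhedron c :=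
    subset_convexHull ℝ _ ⟨α, hα, fun i => by have := hle i; linarith⟩
  refine (hx.2 h1 h2 ?_).symm
  refine ⟨1 / 2, 1 / 2, by norm_num, by norm_num, by norm_num, ?_⟩
  ext i
  simp only [Pi.add_apply, Pi.smul_apply, smul_eq_mul]
  ring

lemma vertex_mem {n : ℕ} {c : (Fin n → ℕ) → ℝ} {x : Fin n → ℝ} (hx : x ∈ newtonVertices c) :
    ∃ α : Fin n → ℕ, c α ≠ 0 ∧ x = fun i => (α i : ℝ) := by
  obtain ⟨α, hα, hle⟩ := extremePoints_convexHull_subset hx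
  exact ⟨α, hα, vertex_eq hx hα hle⟩

lemma vertices_finite {n : ℕ} (c : (Fin n → ℕ) → ℝ) : (newtonVertices c).Finite := by
  let φ : (Fin n → ℕ) → (Fin n → ℝ) := fun α i => (α i : ℝ)
  let W : Set (Fin n → ℕ) := {α | c α ≠ 0 ∧ φ α ∈ newtonVertices c}
  have hanti : IsAntichain (· ≤ ·) W := by
    intro α hα β hβ hne hle
    apply hne
    have := vertex_eq hβ.2 hα.1 (fun i => Nat.cast_le.2 (hle i))
    ext i
    have h2 := congrFun this i
    exact (Nat.cast_injective (R := ℝ) h2).symm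
  have hfin : W.Finite := hanti.finite_of_partiallyWellOrderedOn (Set.isPWO_of_wellQuasiOrderedLE W)
  refine (hfin.image φ).subset fun x hx => ?_
  obtain ⟨α, hα, rfl⟩ := vertex_mem hx
  exact ⟨α, ⟨hα, hx⟩, rfl⟩

lemma vertices_nonempty {n : ℕ} {c : (Fin n → ℕ) → ℝ} (hc : c ≠ 0) :
    (newtonVertices c).Nonempty := by
  classical
  have hex : ∃ N, ∃ α : Fin n → ℕ, c α ≠ 0 ∧ ∑ i, α i = N := by
    obtain ⟨α, hα⟩ := Function.ne_iff.1 hc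
    exact ⟨_, α, hα, rfl⟩
  set N := Nat.find hex with hN
  let φ : (Fin n → ℕ) → (Fin n → ℝ) := fun α i => (α i : ℝ)
  let F : Set (Fin n → ℕ) := {α | c α ≠ 0 ∧ ∑ i, α i = N}
  have hFfin : F.Finite := by
    refine (Set.finite_Icc (0 : Fin n → ℕ) (fun _ => N)).subset fun α hα => ?_
    refine ⟨fun i => Nat.zero_le _, fun i => ?_⟩
    rw [← hα.2]
    exact Finset.single_le_sum (f := α) (fun _ _ => Nat.zero_le _) (Finset.mem_univ i)
  have hFne : F.Nonempty := Nat.find_spec hex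
  set K := convexHull ℝ (φ '' F) with hK
  have hKc : IsCompact K := (hFfin.image φ).isCompact_convexHull ℝ
  obtain ⟨x, hx⟩ := hKc.extremePoints_nonempty ((hFne.image φ).convexHull)
  have hKP : K ⊆ newtonPolyhedron c := by
    refine convexHull_mono ?_
    rintro _ ⟨α, hα, rfl⟩
    exact ⟨α, hα.1, fun i => le_rfl⟩
  let T : Set (Fin n → ℝ) := {x | (N : ℝ) ≤ ∑ i, x i ∧ (∑ i, x i = N → x ∈ K)}
  have hsum : ∀ (p q : ℝ) (x y : Fin n → ℝ),
      ∑ i, (p • x + q • y) i = p * ∑ i, x i + q * ∑ i, y i := by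
    intro p q x y
    simp [Finset.sum_add_distrib, Finset.mul_sum]
  have hKN : K ⊆ {x | ∑ i, x i = (N : ℝ)} := by
    refine convexHull_min ?_ ?_
    · rintro _ ⟨α, hα, rfl⟩
      simp only [Set.mem_ofPred_eq, φ]
      rw [← hα.2]; push_cast; rfl
    · intro x hx y hy p q hp hq hpq
      simp only [Set.mem_ofPred_eq] at hx hy ⊢
      rw [hsum, hx, hy, ← add_mul, hpq, one_mul]
  have key : ∀ (p q A B M : ℝ), 0 < p → 0 < q → p + q = 1 → M ≤ A → M ≤ B → p * A + q * B = M →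
      A = M ∧ B = M := by
    intro p q A B M hp hq hpq hA hB h
    have h1 : p * (A - M) + q * (B - M) = 0 := by linear_combination h - M * hpq
    have h2 : 0 ≤ p * (A - M) := mul_nonneg hp.le (by linarith)
    have h3 : 0 ≤ q * (B - M) := mul_nonneg hq.le (by linarith)
    constructor
    · have : p * (A - M) = 0 := by linarith
      rcases mul_eq_zero.1 this with h | h <;> linarith
    · have : q * (B - M) = 0 := by linarith
      rcases mul_eq_zero.1 this with h | h <;> linarith
  have hPT : newtonPolyhedron c ⊆ T := by
    refine convexHull_min ?_ ?_
    · rintro x ⟨α, hα, hle⟩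
      have h1 : N ≤ ∑ i, α i := Nat.find_min' hex ⟨α, hα, rfl⟩
      have h2 : ∑ i, (α i : ℝ) ≤ ∑ i, x i := Finset.sum_le_sum fun i _ => hle i
      have h3 : (N : ℝ) ≤ ∑ i, (α i : ℝ) := by exact_mod_cast h1
      refine ⟨h3.trans h2, fun h => ?_⟩
      have h4 : ∑ i, (α i : ℝ) = ∑ i, x i := by linarith
      have h5 := (Finset.sum_eq_sum_iff_of_le (fun i _ => hle i)).1 h4
      have h6 : x = φ α := funext fun i => (h5 i (Finset.mem_univ i)).symm
      rw [h6]
      refine subset_convexHull ℝ _ ⟨α, ⟨hα, ?_⟩, rfl⟩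
      have : ∑ i, (α i : ℝ) = N := by linarith
      exact_mod_cast this
    · intro x hx y hy p q hp hq hpq
      refine ⟨?_, fun h => ?_⟩
      · rw [hsum]
        have h1 := mul_le_mul_of_nonneg_left hx.1 hp
        have h2 := mul_le_mul_of_nonneg_left hy.1 hq
        have h3 : p * (N : ℝ) + q * N = N := by rw [← add_mul, hpq, one_mul]
        linarith
      · rw [hsum] at h
        rcases hp.eq_or_lt with rfl | hp
        · have : q = 1 := by linarith
          subst this
          simp only [zero_mul, one_mul, zero_add] at h
          simpa using hy.2 h
        rcases hq.eq_or_lt with rfl | hq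
        · have : p = 1 := by linarith
          subst this
          simp only [zero_mul, one_mul, add_zero] at h
          simpa using hx.2 h
        obtain ⟨e1, e2⟩ := key p q _ _ _ hp hq hpq hx.1 hy.1 h
        exact (convex_convexHull ℝ _) (hx.2 e1) (hy.2 e2) hp.le hq.le hpq
  refine ⟨x, hKP hx.1, fun y hy z hz hxyz => ?_⟩
  obtain ⟨p, q, hp, hq, hpq, he⟩ := id hxyz
  have hyT := hPT hy
  have hzT := hPT hz
  have h1 : p * ∑ i, y i + q * ∑ i, z i = N := by rw [← hsum, he]; exact hKN hx.1
  obtain ⟨e1, e2⟩ := key p q _ _ _ hp hq hpq hyT.1 hzT.1 h1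
  exact hx.2 (hyT.2 e1) (hzT.2 e2) hxyz

lemma coeff_zero {n : ℕ} {S : (Fin n → ℝ) → ℝ} {c : (Fin n → ℕ) → ℝ}
    (hSc : HasTaylorSeriesAtOrigin S c) (hS0 : S 0 = 0) : c 0 = 0 := by
  have h1 := hSc.self_of_nhds
  have h2 : HasSum (fun α => c α * monomial α (0 : Fin n → ℝ)) (c 0) := by
    have := hasSum_single (f := fun α => c α * monomial α (0 : Fin n → ℝ)) 0 (fun α hα => ?_)
    · simpa [monomial] using this
    · obtain ⟨i, hi⟩ := Function.ne_iff.1 hα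
      have : monomial α (0 : Fin n → ℝ) = 0 :=
        Finset.prod_eq_zero (Finset.mem_univ i) (by simpa using hi)
      simp [this]
  rw [← h2.unique h1] at hS0
  exact hS0

/-- Collected facts on the vertex set. -/
lemma vertices_facts {n : ℕ} {S : (Fin n → ℝ) → ℝ} {c : (Fin n → ℕ) → ℝ}
    (hSc : HasTaylorSeriesAtOrigin S c) (hS0 : S 0 = 0) (hc : c ≠ 0) :
    ∃ V : Finset (Fin n → ℝ), V.Nonempty ∧ (∀ v ∈ V, ∀ i, 0 ≤ v i) ∧ (∀ v ∈ V, 1 ≤ ∑ i, v i) ∧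
      ∀ y : Fin n → ℝ, starFn c (fun i => Real.exp (-y i)) =
        ∑ v ∈ V, Real.exp (-∑ i, v i * y i) := by
  have hfin := vertices_finite c
  refine ⟨hfin.toFinset, ?_, ?_, ?_, ?_⟩
  · simpa using vertices_nonempty hc
  · intro v hv i
    obtain ⟨α, -, rfl⟩ := vertex_mem (hfin.mem_toFinset.1 hv)
    exact Nat.cast_nonneg _
  · intro v hv
    obtain ⟨α, hα, rfl⟩ := vertex_mem (hfin.mem_toFinset.1 hv)
    have h0 : α ≠ 0 := by
      rintro rfl
      exact hα (coeff_zero hSc hS0)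
    have h1 : 1 ≤ ∑ i, α i := by
      obtain ⟨i, hi⟩ := Function.ne_iff.1 h0
      have h2 := Finset.single_le_sum (f := α) (fun _ _ => Nat.zero_le _) (Finset.mem_univ i)
      have h3 : α i ≠ 0 := hi
      omega
    show (1 : ℝ) ≤ ∑ i, (α i : ℝ)
    exact_mod_cast h1
  · intro y
    have h1 : ∀ v : Fin n → ℝ, ∏ i, |Real.exp (-y i)| ^ (v i) = Real.exp (-∑ i, v i * y i) := by
      intro v
      rw [← Finset.sum_neg_distrib, Real.exp_sum]
      refine Finset.prod_congr rfl fun i _ => ?_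
      rw [abs_of_pos (Real.exp_pos _), ← Real.exp_mul]
      congr 1; ring
    unfold starFn
    simp only [h1]
    rw [← Finset.tsum_subtype' hfin.toFinset (fun v => Real.exp (-∑ i, v i * y i)),
      hfin.coe_toFinset]

/-- Choices of one variable out of each group. -/
abbrev Sel {n m : ℕ} (grp : Fin n → Fin m) : Type := {s : Fin m → Fin n // ∀ k, grp (s k) = k}

/-- The linear form attached to a selection. -/
def selForm {n m : ℕ} (grp : Fin n → Fin m) (a : Fin m → ℝ) (s : Sel grp) :
    (Fin n → ℝ) →ₗ[ℝ] ℝ :=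
  ∑ i, LinearMap.proj i - ∑ k, a k • LinearMap.proj (s.1 k)

lemma selForm_apply {n m : ℕ} (grp : Fin n → Fin m) (a : Fin m → ℝ) (s : Sel grp)
    (y : Fin n → ℝ) : selForm grp a s y = ∑ i, y i - ∑ k, a k * y (s.1 k) := by
  simp [selForm]

/-- The density in logarithmic coordinates. -/
def logDensity {n m : ℕ} (grp : Fin n → Fin m) (a : Fin m → ℝ) (y : Fin n → ℝ) : ℝ :=
  kernelWeight grp a (fun i => Real.exp (-y i)) * Real.exp (-∑ i, y i)

lemma exists_argmin {n m : ℕ} (grp : Fin n → Fin m) (hgrp : Function.Surjective grp)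
    (y : Fin n → ℝ) : ∃ s : Sel grp, ∀ k i, grp i = k → y (s.1 k) ≤ y i := by
  have : ∀ k, ∃ j, grp j = k ∧ ∀ i, grp i = k → y j ≤ y i := by
    intro k
    obtain ⟨i0, hi0⟩ := hgrp k
    obtain ⟨j, hj, hmin⟩ := Finset.exists_min_image (Finset.univ.filter (fun i => grp i = k)) y
      ⟨i0, by simp [hi0]⟩
    exact ⟨j, by simpa using hj, fun i hi => hmin i (by simp [hi])⟩
  choose s hs hmin using this
  exact ⟨⟨s, hs⟩, hmin⟩

lemma grpNorm_ge {n m : ℕ} (grp : Fin n → Fin m) (y : Fin n → ℝ) (i : Fin n) :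
    Real.exp (-y i) ≤ grpNorm grp (grp i) (fun i => Real.exp (-y i)) := by
  refine Real.le_sqrt_of_sq_le ?_
  exact Finset.single_le_sum (f := fun i => Real.exp (-y i) ^ 2) (fun _ _ => sq_nonneg _)
    (by simp)

lemma grpNorm_pos {n m : ℕ} (grp : Fin n → Fin m) (hgrp : Function.Surjective grp)
    (y : Fin n → ℝ) (k : Fin m) : 0 < grpNorm grp k (fun i => Real.exp (-y i)) := by
  obtain ⟨i, rfl⟩ := hgrp k
  exact (Real.exp_pos _).trans_le (grpNorm_ge grp y i)

lemma logDensity_pos {n m : ℕ} (grp : Fin n → Fin m) (hgrp : Function.Surjective grp)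
    (a : Fin m → ℝ) (y : Fin n → ℝ) : 0 < logDensity grp a y :=
  mul_pos (Finset.prod_pos fun k _ => Real.rpow_pos_of_pos (grpNorm_pos grp hgrp y k) _)
    (Real.exp_pos _)

lemma exp_selForm {n m : ℕ} (grp : Fin n → Fin m) (a : Fin m → ℝ) (s : Sel grp)
    (y : Fin n → ℝ) : Real.exp (-selForm grp a s y) =
      (∏ k, Real.exp (-y (s.1 k)) ^ (-(a k))) * Real.exp (-∑ i, y i) := by
  have : ∀ k, Real.exp (-y (s.1 k)) ^ (-(a k)) = Real.exp (a k * y (s.1 k)) := by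
    intro k
    rw [← Real.exp_mul]; congr 1; ring
  simp only [this]
  rw [← Real.exp_sum, ← Real.exp_add, selForm_apply]
  congr 1; ring

lemma logDensity_le {n m : ℕ} (grp : Fin n → Fin m) (hgrp : Function.Surjective grp)
    (a : Fin m → ℝ) (ha : ∀ k, 0 ≤ a k) (y : Fin n → ℝ) (s : Sel grp) :
    logDensity grp a y ≤ Real.exp (-selForm grp a s y) := by
  rw [exp_selForm]
  refine mul_le_mul_of_nonneg_right ?_ (Real.exp_pos _).le
  refine Finset.prod_le_prod
    (fun k _ => (Real.rpow_pos_of_pos (grpNorm_pos grp hgrp y k) _).le) fun k _ => ?_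
  refine Real.rpow_le_rpow_of_nonpos (Real.exp_pos _) ?_ (by have := ha k; linarith)
  have := grpNorm_ge grp y (s.1 k)
  rwa [s.2 k] at this

lemma logDensity_ge {n m : ℕ} (hn : 0 < n) (grp : Fin n → Fin m) (hgrp : Function.Surjective grp)
    (a : Fin m → ℝ) (ha : ∀ k, 0 ≤ a k) :
    ∃ c : ℝ, 0 < c ∧ ∀ y, ∃ s, c * Real.exp (-selForm grp a s y) ≤ logDensity grp a y := by
  have hn' : (0 : ℝ) < Real.sqrt n := Real.sqrt_pos.2 (by exact_mod_cast hn)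
  refine ⟨∏ k, Real.sqrt n ^ (-(a k)), Finset.prod_pos fun k _ => Real.rpow_pos_of_pos hn' _,
    fun y => ?_⟩
  obtain ⟨s, hs⟩ := exists_argmin grp hgrp y
  refine ⟨s, ?_⟩
  rw [exp_selForm, ← mul_assoc, ← Finset.prod_mul_distrib]
  refine mul_le_mul_of_nonneg_right ?_ (Real.exp_pos _).le
  refine Finset.prod_le_prod (fun k _ => by positivity) fun k _ => ?_
  rw [← Real.mul_rpow hn'.le (Real.exp_pos _).le]
  refine Real.rpow_le_rpow_of_nonpos (grpNorm_pos grp hgrp y k) ?_ (by have := ha k; linarith)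
  rw [← Real.sqrt_sq (Real.exp_pos (-y (s.1 k))).le, ← Real.sqrt_mul (Nat.cast_nonneg n)]
  refine Real.sqrt_le_sqrt ?_
  have h1 : ∑ i ∈ Finset.univ.filter (fun i => grp i = k), Real.exp (-y i) ^ 2 ≤
      (Finset.univ.filter (fun i => grp i = k)).card • Real.exp (-y (s.1 k)) ^ 2 := by
    refine Finset.sum_le_card_nsmul _ _ _ fun i hi => ?_
    have h2 : y (s.1 k) ≤ y i := hs k i (by simpa using hi)
    gcongr
  refine h1.trans ?_
  rw [nsmul_eq_mul]
  refine mul_le_mul_of_nonneg_right ?_ (sq_nonneg _)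
  have := Finset.card_filter_le (Finset.univ : Finset (Fin n)) (fun i => grp i = k)
  rw [Finset.card_univ, Fintype.card_fin] at this
  exact_mod_cast this

lemma selForm_coercive {n m : ℕ} (hm : 0 < m) (grp : Fin n → Fin m)
    (hgrp : Function.Surjective grp) (l : Fin m → ℕ)
    (hl : ∀ k, l k = (Finset.univ.filter (fun i => grp i = k)).card)
    (a : Fin m → ℝ) (ha : ∀ k, 0 ≤ a k ∧ a k < l k) :
    ∃ c0 : ℝ, 0 < c0 ∧ ∀ (y : Fin n → ℝ) (τ : ℝ), (∀ i, 0 ≤ y i) →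
      (∀ s, selForm grp a s y ≤ τ) → c0 * ∑ i, y i ≤ τ := by
  have : Nonempty (Fin m) := ⟨⟨0, hm⟩⟩
  obtain ⟨k0, -, hk0⟩ := Finset.exists_min_image (Finset.univ : Finset (Fin m))
    (fun k => 1 - a k / l k) Finset.univ_nonempty
  have hlpos : ∀ k, (0 : ℝ) < l k := fun k => (ha k).1.trans_lt (ha k).2
  refine ⟨1 - a k0 / l k0, ?_, fun y τ hy hτ => ?_⟩
  · rw [sub_pos, div_lt_one (hlpos k0)]
    exact (ha k0).2
  obtain ⟨s, hs⟩ := exists_argmin grp hgrp y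
  refine le_trans ?_ (hτ s)
  rw [selForm_apply]
  let Y : Fin m → ℝ := fun k => ∑ i ∈ Finset.univ.filter (fun i => grp i = k), y i
  have hY : ∑ i, y i = ∑ k, Y k :=
    (Finset.sum_fiberwise_of_maps_to (fun i _ => Finset.mem_univ (grp i)) _).symm
  rw [hY, Finset.mul_sum, ← Finset.sum_sub_distrib]
  refine Finset.sum_le_sum fun k _ => ?_
  have hYk : 0 ≤ Y k := Finset.sum_nonneg fun i _ => hy i
  have h1 : (l k : ℝ) * y (s.1 k) ≤ Y k := by
    rw [hl k, ← nsmul_eq_mul]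
    exact Finset.card_nsmul_le_sum _ _ _ fun i hi => hs k i (by simpa using hi)
  have h2 : a k * y (s.1 k) ≤ a k / l k * Y k := by
    have h3 := mul_le_mul_of_nonneg_left h1 (div_nonneg (ha k).1 (hlpos k).le)
    have h4 : a k / l k * (l k * y (s.1 k)) = a k * y (s.1 k) := by
      field_simp [(hlpos k).ne']
    linarith
  have h5 := mul_le_mul_of_nonneg_right (hk0 k (Finset.mem_univ k)) hYk
  linarith

lemma fracMeasure_image {n m : ℕ} (grp : Fin n → Fin m) (a : Fin m → ℝ) (E : Set (Fin n → ℝ))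
    (hE : MeasurableSet E) :
    fracMeasure grp a ((fun (y : Fin n → ℝ) i => Real.exp (-y i)) '' E) =
      ∫⁻ y in E, ENNReal.ofReal (logDensity grp a y) := by
  rw [fracMeasure, withDensity_apply']
  let f' : (Fin n → ℝ) → (Fin n → ℝ) →L[ℝ] (Fin n → ℝ) := fun y =>
    ContinuousLinearMap.pi fun i =>
      (-Real.exp (-y i)) • (ContinuousLinearMap.proj i : (Fin n → ℝ) →L[ℝ] ℝ)
  have hf' : ∀ y ∈ E, HasFDerivWithinAt (fun (y : Fin n → ℝ) i => Real.exp (-y i)) (f' y) E y := by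
    intro y _
    refine HasFDerivAt.hasFDerivWithinAt ?_
    rw [hasFDerivAt_pi]
    intro i
    have h1 : HasFDerivAt (fun y : Fin n → ℝ => y i)
      (ContinuousLinearMap.proj i : (Fin n → ℝ) →L[ℝ] ℝ) y := hasFDerivAt_apply i y
    have h2 := h1.neg.exp
    have h3 : (-Real.exp (-y i)) • (ContinuousLinearMap.proj i : (Fin n → ℝ) →L[ℝ] ℝ) =
      Real.exp (-y i) • -(ContinuousLinearMap.proj i : (Fin n → ℝ) →L[ℝ] ℝ) := by
      apply ContinuousLinearMap.ext
      intro x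
      show -Real.exp (-y i) * x i = Real.exp (-y i) * -(x i)
      ring
    show HasFDerivAt _ ((-Real.exp (-y i)) • (ContinuousLinearMap.proj i : (Fin n → ℝ) →L[ℝ] ℝ)) y
    rw [h3]
    exact h2
  have hinj : Set.InjOn (fun (y : Fin n → ℝ) i => Real.exp (-y i)) E := by
    intro x _ y _ h
    ext i
    have := congrFun h i
    simpa using this
  rw [lintegral_image_eq_lintegral_abs_det_fderiv_mul volume hE hf' hinj]
  refine lintegral_congr fun y => ?_
  have hdet : |(f' y).det| = Real.exp (-∑ i, y i) := by
    have h1 : (f' y).det = ∏ i, (-Real.exp (-y i)) := by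
      have : (f' y : (Fin n → ℝ) →ₗ[ℝ] (Fin n → ℝ)) =
        Matrix.toLin' (Matrix.diagonal fun i => -Real.exp (-y i)) := by
        apply LinearMap.ext
        intro x
        ext i
        simp [f', Matrix.mulVec_diagonal]
      rw [ContinuousLinearMap.det, this, LinearMap.det_toLin', Matrix.det_diagonal]
    rw [h1, Finset.abs_prod, ← Finset.sum_neg_distrib, Real.exp_sum]
    refine Finset.prod_congr rfl fun i _ => ?_
    rw [abs_neg, abs_of_pos (Real.exp_pos _)]
  rw [hdet, ← ENNReal.ofReal_mul (Real.exp_pos _).le, logDensity, mul_comm]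

/-- **Lemma 2.1.** There are `r₀ > 0`, `a₀ > 0` and an integer `0 ≤ d₀ ≤ n-1` such that
for every `0 < r < r₀` there are positive constants `b_r`, `B_r` with
`b_r ε^{a₀} |ln ε|^{d₀} < μ({t ∈ (0,r)^n : S^*(t) < ε}) < B_r ε^{a₀} |ln ε|^{d₀}`
for all `0 < ε < 1/2`. -/
theorem lemma_2_1
    (n m : ℕ) (hn : 0 < n) (hm : 0 < m)
    (grp : Fin n → Fin m) (hgrp : Function.Surjective grp)
    (l : Fin m → ℕ) (hl : ∀ k, l k = (Finset.univ.filter (fun i => grp i = k)).card)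
    (a : Fin m → ℝ) (ha : ∀ k, 0 ≤ a k ∧ a k < l k)
    (S : (Fin n → ℝ) → ℝ) (c : (Fin n → ℕ) → ℝ)
    (hSc : HasTaylorSeriesAtOrigin S c) (hc : c ≠ 0)
    (hS0 : S 0 = 0) (hS1 : fderiv ℝ S 0 = 0) :
    ∃ r₀ > (0 : ℝ), ∃ a₀ : ℝ, 0 < a₀ ∧ ∃ d₀ : ℕ, d₀ ≤ n - 1 ∧
      ∀ r : ℝ, 0 < r → r < r₀ →
        ∃ b B : ℝ, 0 < b ∧ 0 < B ∧ ∀ ε : ℝ, 0 < ε → ε < 1/2 →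
          ENNReal.ofReal (b * ε ^ a₀ * |Real.log ε| ^ d₀) <
              fracMeasure grp a {t | (∀ i, t i ∈ Set.Ioo 0 r) ∧ starFn c t < ε} ∧
            fracMeasure grp a {t | (∀ i, t i ∈ Set.Ioo 0 r) ∧ starFn c t < ε} <
              ENNReal.ofReal (B * ε ^ a₀ * |Real.log ε| ^ d₀) := by
  obtain ⟨V, hVne, hV0, hV1, hstar⟩ := vertices_facts hSc hS0 hc
  obtain ⟨c0, hc0, hpos⟩ := selForm_coercive hm grp hgrp l hl a ha
  obtain ⟨a₀, ha₀, d, e, hde, he, p0, p, bs, hp0, hp, hbi, C, hC, hb⟩ :=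
    structure_thm V hVne hV1 (selForm grp a) c0 hc0 hpos
  obtain ⟨B, hB, hup⟩ := upper_bound V (selForm grp a) a₀ d e hde p0 bs C hC hb (logDensity grp a)
    (fun y _ => ⟨logDensity_pos grp hgrp a y,
      fun s => logDensity_le grp hgrp a (fun k => (ha k).1) y s⟩)
  obtain ⟨c1, hc1, hge⟩ := logDensity_ge hn grp hgrp a (fun k => (ha k).1)
  refine ⟨1, one_pos, a₀, ha₀, d, by omega, fun r hr hr1 => ?_⟩
  have hρ : 0 ≤ -Real.log r := by
    have := Real.log_neg hr hr1
    linarith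
  have hcard : (1 : ℝ) ≤ V.card := by exact_mod_cast hVne.card_pos
  obtain ⟨β, hβ, hlow⟩ := lower_bound V hV0 hV1 (selForm grp a) a₀ d e p0 p bs hp0 hp hbi
    (logDensity grp a) c1 hc1 (fun y _ => hge y) (-Real.log r) (Real.log V.card) hρ
    (Real.log_nonneg hcard)
  refine ⟨β / 2, 2 * B, by positivity, by positivity, fun ε hε hε2 => ?_⟩
  set L := -Real.log ε with hL
  have hL1 : 1 / 2 ≤ L := by
    have h1 := Real.log_lt_log hε hε2
    have h2 : Real.log (1 / 2) = -Real.log 2 := by rw [one_div, Real.log_inv]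
    have h3 := Real.log_two_gt_d9
    linarith
  have hL0 : 0 < L := by linarith
  have hexpL : Real.exp (-L) = ε := by rw [hL, neg_neg, Real.exp_log hε]
  have habs : |Real.log ε| = L := by
    rw [abs_of_neg (by linarith)]
  have hpow : ε ^ a₀ = Real.exp (-(a₀ * L)) := by
    rw [Real.rpow_def_of_pos hε]; congr 1; rw [hL]; ring
  rw [habs, hpow]
  let E : Set (Fin n → ℝ) := {y | (∀ i, -Real.log r < y i) ∧
    ∑ v ∈ V, Real.exp (-∑ i, v i * y i) < ε}
  have hEm : MeasurableSet E := by
    have h1 : IsOpen {y : Fin n → ℝ | ∀ i, -Real.log r < y i} := by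
      have : {y : Fin n → ℝ | ∀ i, -Real.log r < y i} = ⋂ i, {y | -Real.log r < y i} := by
        ext y; simp
      rw [this]
      exact isOpen_iInter_of_finite fun i => isOpen_lt continuous_const (continuous_apply i)
    have h2 : IsOpen {y : Fin n → ℝ | ∑ v ∈ V, Real.exp (-∑ i, v i * y i) < ε} :=
      isOpen_lt (by fun_prop) continuous_const
    exact (h1.inter h2).measurableSet
  have hset : {t : Fin n → ℝ | (∀ i, t i ∈ Set.Ioo 0 r) ∧ starFn c t < ε} =
      (fun (y : Fin n → ℝ) i => Real.exp (-y i)) '' E := by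
    ext t
    constructor
    · rintro ⟨h1, h2⟩
      have ht : (fun i => Real.exp (-(-Real.log (t i)))) = t := by
        ext i
        rw [neg_neg, Real.exp_log (h1 i).1]
      refine ⟨fun i => -Real.log (t i), ⟨fun i => ?_, ?_⟩, ht⟩
      · exact neg_lt_neg (Real.log_lt_log (h1 i).1 (h1 i).2)
      · rw [← hstar, ht]
        exact h2
    · rintro ⟨y, ⟨h1, h2⟩, rfl⟩
      refine ⟨fun i => ⟨Real.exp_pos _, ?_⟩, ?_⟩
      · show Real.exp (-y i) < r
        rw [← Real.lt_log_iff_exp_lt hr]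
        have := h1 i
        linarith
      · rw [hstar]
        exact h2
  rw [hset, fracMeasure_image grp a E hEm]
  have hQ : 0 < Real.exp (-(a₀ * L)) * L ^ d := by positivity
  constructor
  · refine lt_of_lt_of_le ?_ ((hlow L hL0).trans (lintegral_mono_set ?_))
    · rw [ENNReal.ofReal_lt_ofReal_iff (by positivity)]
      have := mul_pos hβ hQ
      linarith
    · rintro y ⟨h1, h2⟩
      refine ⟨h1, ?_⟩
      have h3 : ∑ v ∈ V, Real.exp (-∑ i, v i * y i) < ∑ v ∈ V, ε / V.card := by
        refine Finset.sum_lt_sum_of_nonempty hVne fun v hv => ?_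
        rw [← hexpL, ← Real.exp_log (lt_of_lt_of_le one_pos hcard), ← Real.exp_sub]
        refine Real.exp_lt_exp.2 ?_
        have := h2 v hv
        linarith
      rw [Finset.sum_const, nsmul_eq_mul, mul_div_cancel₀] at h3
      · exact h3
      · linarith
  · refine lt_of_le_of_lt ((lintegral_mono_set ?_).trans (hup L hL1)) ?_
    · rintro y ⟨h1, h2⟩
      refine ⟨fun i => hρ.trans_lt (h1 i), fun v hv => ?_⟩
      have h3 : Real.exp (-∑ i, v i * y i) ≤ ∑ v ∈ V, Real.exp (-∑ i, v i * y i) :=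
        Finset.single_le_sum (f := fun v => Real.exp (-∑ i, v i * y i))
          (fun _ _ => (Real.exp_pos _).le) hv
      have h4 := h3.trans_lt h2
      rw [← hexpL, Real.exp_lt_exp] at h4
      linarith
    · rw [ENNReal.ofReal_lt_ofReal_iff (by positivity)]
      have := mul_pos hB hQ
      linarith

end Paper
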